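/- Let E = EuclideanSpace ℝ (Fin N), let f : E → ℝ be differentiable, let W : E →ₗ[ℝ] E be self-adjoint positive definite, let Δt > 0, and let M, C : E →ₗ[ℝ] E be self-adjoint. Define the Gonzalez flux G_GS : E × E → E by G_GS(x,y) := ∇f((x+y)/2) + ((f(y) − f(x) − ⟪∇f((x+y)/2), y−x⟫)/⟪y−x, W(y−x)⟫) • W(y−x) for y ≠ x, and G_GS(x,x) := ∇f(x). Suppose u : ℕ → E satisfies, for all n ≥ 1, M((u(n+1) − 2u(n) + u(n−1))/Δt²) + C((u(n+1) − u(n−1))/(2Δt)) + G_GS((u(n)+u(n−1))/2, (u(n+1)+u(n))/2) = 0. Then with v(n) := (u(n) − u(n−1))/Δt, m(n) := (u(n) + u(n−1))/2, Π(n) := (1/2)⟪v(n), M v(n)⟫ + f(m(n)), and w(n) := (u(n+1) − u(n−1))/(2Δt), one has Π(n+1) − Π(n) = −Δt ⟪w(n), C w(n)⟫ for all n ≥ 1. -/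

import Mathlib

/-!
Pair the scheme with the difference of consecutive midpoints, `m(n+1) - m(n) = Δt w(n)`.
The quotient in the Gonzalez flux is chosen so that the flux term contributes exactly
`f (m(n+1)) - f (m(n))`. The damping term contributes `Δt ⟪w(n), C w(n)⟫`. The inertial term
applies `M` to `(v(n+1) - v(n)) / Δt`, while `Δt w(n) = Δt (v(n+1) + v(n)) / 2`, so for symmetric
`M` it is a difference of squares: the increment of `(1/2) ⟪v, M v⟫`.
-/

open RealInnerProductSpace

open Classical in
/-- The Gonzalez discrete-gradient flux associated with a potential `f` and a
self-adjoint positive-definite weighting operator `W`. -/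
noncomputable def gonzalezFlux {N : ℕ}
    (f : EuclideanSpace ℝ (Fin N) → ℝ)
    (W : EuclideanSpace ℝ (Fin N) →ₗ[ℝ] EuclideanSpace ℝ (Fin N))
    (x y : EuclideanSpace ℝ (Fin N)) : EuclideanSpace ℝ (Fin N) :=
  if y = x then gradient f x
  else
    gradient f ((2 : ℝ)⁻¹ • (x + y)) +
      ((f y - f x - ⟪gradient f ((2 : ℝ)⁻¹ • (x + y)), y - x⟫) / ⟪y - x, W (y - x)⟫) •
        W (y - x)

section InnerProductSpace

variable {E : Type*} [NormedAddCommGroup E] [InnerProductSpace ℝ E]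

lemma inner_add_div_smul_eq (g : E) (c : ℝ) {d w : E} (hdw : ⟪d, w⟫ ≠ 0) :
    ⟪g + ((c - ⟪g, d⟫) / ⟪d, w⟫) • w, d⟫ = c := by
  rw [inner_add_left, real_inner_smul_left, real_inner_comm d w, div_mul_cancel₀ _ hdw,
    add_sub_cancel]

lemma inner_map_sub_add_of_isSymmetric {M : E →ₗ[ℝ] E} (hM : M.IsSymmetric) (a b : E) :
    ⟪M (a - b), a + b⟫ = ⟪a, M a⟫ - ⟪b, M b⟫ := by
  have hcross : ⟪a, M b⟫ = ⟪b, M a⟫ := by rw [← hM, real_inner_comm]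
  rw [hM, map_add, inner_add_right, inner_sub_left, inner_sub_left, hcross]
  ring

lemma inner_map_second_difference {M : E →ₗ[ℝ] E} (hM : M.IsSymmetric) (τ : ℝ) (x y z : E) :
    ⟪M ((τ ^ 2)⁻¹ • (z - (2 : ℝ) • y + x)), (2 : ℝ)⁻¹ • (z - x)⟫ =
      (1 / 2 : ℝ) * ⟪τ⁻¹ • (z - y), M (τ⁻¹ • (z - y))⟫ -
        (1 / 2 : ℝ) * ⟪τ⁻¹ • (y - x), M (τ⁻¹ • (y - x))⟫ := by
  have hsecond : z - (2 : ℝ) • y + x = (z - y) - (y - x) := by module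
  have hcentred : z - x = (z - y) + (y - x) := by module
  rw [hsecond, hcentred]
  simp only [map_smul, real_inner_smul_left, real_inner_smul_right,
    inner_map_sub_add_of_isSymmetric hM]
  ring

/-- The directionality condition in the definition of a discrete gradient `G` of `f`: a discrete
chain rule along the segment from `x` to `y`. The other condition in that definition, the
consistency `G x x = ∇f x`, is not included. -/
def HasSecantProperty (f : E → ℝ) (G : E → E → E) : Prop :=
  ∀ x y, ⟪G x y, y - x⟫ = f y - f x

/-- The discrete energy `Π` of two consecutive states `x`, `y` at time step `τ`: kinetic energy
with mass operator `M` at the difference quotient, plus the potential `f` at the midpoint. -/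
noncomputable def midpointEnergy (M : E →ₗ[ℝ] E) (f : E → ℝ) (τ : ℝ) (x y : E) : ℝ :=
  (1 / 2 : ℝ) * ⟪τ⁻¹ • (y - x), M (τ⁻¹ • (y - x))⟫ + f ((2 : ℝ)⁻¹ • (y + x))

theorem gonzalez_scheme_energy_balance_general {f : E → ℝ} {G : E → E → E}
    (hG : HasSecantProperty f G) {τ : ℝ} (hτ : τ ≠ 0) {M : E →ₗ[ℝ] E} (hM : M.IsSymmetric)
    (C : E → E) {x y z : E}
    (hscheme : M ((τ ^ 2)⁻¹ • (z - (2 : ℝ) • y + x)) + C ((2 * τ)⁻¹ • (z - x)) +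
      G ((2 : ℝ)⁻¹ • (y + x)) ((2 : ℝ)⁻¹ • (z + y)) = 0) :
    midpointEnergy M f τ y z - midpointEnergy M f τ x y =
      -τ * ⟪(2 * τ)⁻¹ • (z - x), C ((2 * τ)⁻¹ • (z - x))⟫ := by
  set w := (2 * τ)⁻¹ • (z - x) with hw
  have hstep : (2 : ℝ)⁻¹ • (z - x) = τ • w := by
    rw [hw, smul_smul]
    congr 1
    field_simp
  have hmid : (2 : ℝ)⁻¹ • (z + y) - (2 : ℝ)⁻¹ • (y + x) = τ • w := by
    rw [← hstep]
    module
  have hinertia := inner_map_second_difference hM τ x y z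
  have hflux := hG ((2 : ℝ)⁻¹ • (y + x)) ((2 : ℝ)⁻¹ • (z + y))
  have hpaired := congrArg (fun r ↦ ⟪r, τ • w⟫) hscheme
  have hdamping : ⟪C w, τ • w⟫ = τ * ⟪w, C w⟫ := by
    rw [real_inner_smul_right, real_inner_comm]
  rw [hstep] at hinertia
  rw [hmid] at hflux
  simp only [inner_add_left, inner_zero_left, hinertia, hdamping, hflux] at hpaired
  unfold midpointEnergy
  linear_combination hpaired

end InnerProductSpace

lemma hasSecantProperty_gonzalezFlux {N : ℕ} (f : EuclideanSpace ℝ (Fin N) → ℝ)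
    {W : EuclideanSpace ℝ (Fin N) →ₗ[ℝ] EuclideanSpace ℝ (Fin N)}
    (hW : ∀ v : EuclideanSpace ℝ (Fin N), v ≠ 0 → ⟪v, W v⟫ ≠ 0) :
    HasSecantProperty f (gonzalezFlux f W) := by
  intro x y
  unfold gonzalezFlux
  split_ifs with hyx
  · rw [hyx, sub_self, sub_self, inner_zero_right]
  · exact inner_add_div_smul_eq _ _ (hW _ (sub_ne_zero.mpr hyx))

/-- Unconditional stability (discrete energy balance) of the Gonzalez-type scheme:
`Π(n+1) − Π(n) = −Δt ⟪w(n), C w(n)⟫`, with `v(n) = (u(n) − u(n−1))/Δt`,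
`m(n) = (u(n) + u(n−1))/2`, `Π(n) = (1/2)⟪v(n), M v(n)⟫ + f(m(n))`, and
`w(n) = (u(n+1) − u(n−1))/(2Δt)`. -/
theorem gonzalez_scheme_energy_balance (N : ℕ)
    (f : EuclideanSpace ℝ (Fin N) → ℝ) (hf : Differentiable ℝ f)
    (W : EuclideanSpace ℝ (Fin N) →ₗ[ℝ] EuclideanSpace ℝ (Fin N))
    (hW_sa : ∀ x y : EuclideanSpace ℝ (Fin N), ⟪W x, y⟫ = ⟪x, W y⟫)
    (hW_pd : ∀ v : EuclideanSpace ℝ (Fin N), v ≠ 0 → 0 < ⟪v, W v⟫)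
    (Δt : ℝ) (hΔt : 0 < Δt)
    (M C : EuclideanSpace ℝ (Fin N) →ₗ[ℝ] EuclideanSpace ℝ (Fin N))
    (hM_sa : ∀ x y : EuclideanSpace ℝ (Fin N), ⟪M x, y⟫ = ⟪x, M y⟫)
    (hC_sa : ∀ x y : EuclideanSpace ℝ (Fin N), ⟪C x, y⟫ = ⟪x, C y⟫)
    (u : ℕ → EuclideanSpace ℝ (Fin N))
    (hu : ∀ n, 1 ≤ n →
      M ((Δt ^ 2)⁻¹ • (u (n + 1) - (2 : ℝ) • u n + u (n - 1))) +
        C ((2 * Δt)⁻¹ • (u (n + 1) - u (n - 1))) +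
        gonzalezFlux f W ((2 : ℝ)⁻¹ • (u n + u (n - 1)))
          ((2 : ℝ)⁻¹ • (u (n + 1) + u n)) = 0) :
    ∀ n, 1 ≤ n →
      ((1/2 : ℝ) * ⟪Δt⁻¹ • (u (n + 1) - u n), M (Δt⁻¹ • (u (n + 1) - u n))⟫ +
          f ((2 : ℝ)⁻¹ • (u (n + 1) + u n))) -
        ((1/2 : ℝ) * ⟪Δt⁻¹ • (u n - u (n - 1)), M (Δt⁻¹ • (u n - u (n - 1)))⟫ +
          f ((2 : ℝ)⁻¹ • (u n + u (n - 1)))) =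
      -Δt * ⟪(2 * Δt)⁻¹ • (u (n + 1) - u (n - 1)),
              C ((2 * Δt)⁻¹ • (u (n + 1) - u (n - 1)))⟫ := by
  exact fun n hn ↦ gonzalez_scheme_energy_balance_general
    (hasSecantProperty_gonzalezFlux f fun v hv ↦ (hW_pd v hv).ne') hΔt.ne' hM_sa C (hu n hn)
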